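/- (Lemma 2.2) Let u ∈ ℝ[x_1,…,x_d] have total degree at most 4, let v ∈ P_A, and let w ∈ P_A satisfy w(a) = u(a) and ∇w(a) = ∇u(a) at every vertex a of K (the Adini canonical interpolant of u). Then Σ_{k=1}^d Σ_{l=1}^d ∫_K ∂²(u − w)/∂x_k∂x_l · ∂²v/∂x_k∂x_l dx = − Σ_{i=1}^d Σ_{j ≠ i} (h_j²/3) ∫_K ∂⁴u/∂x_i²∂x_j² · ∂²v/∂x_i² dx. -/

import Mathlib

open MvPolynomial MeasureTheory

/-- `Q₁`: the span of the monomials `x^α` with `α i ≤ 1` for every `i`. -/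
noncomputable def Q1 (d : ℕ) : Submodule ℝ (MvPolynomial (Fin d) ℝ) :=
  Submodule.span ℝ {p | ∃ α : Fin d →₀ ℕ, (∀ i, α i ≤ 1) ∧ p = monomial α (1 : ℝ)}

/-- The Adini shape function space `P_A = Q₁ + span{x_i² q : 1 ≤ i ≤ d, q ∈ Q₁}`. -/
noncomputable def PA (d : ℕ) : Submodule ℝ (MvPolynomial (Fin d) ℝ) :=
  Q1 d ⊔ Submodule.span ℝ {p | ∃ i : Fin d, ∃ q ∈ Q1 d, p = X i ^ 2 * q}

/-- `Q₁^i`: elements of `Q₁` of degree 0 in `x_i`. -/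
noncomputable def Q1i (d : ℕ) (i : Fin d) : Submodule ℝ (MvPolynomial (Fin d) ℝ) :=
  Submodule.span ℝ
    {p | ∃ α : Fin d →₀ ℕ, (∀ j, α j ≤ 1) ∧ α i = 0 ∧ p = monomial α (1 : ℝ)}

/-- `S^i = span{((x_j − c_j)² − h_j²) q̂ : 1 ≤ j ≤ d, q̂ ∈ Q₁^i}`. -/
noncomputable def Si (d : ℕ) (c h : Fin d → ℝ) (i : Fin d) :
    Submodule ℝ (MvPolynomial (Fin d) ℝ) :=
  Submodule.span ℝ
    {p | ∃ j : Fin d, ∃ q ∈ Q1i d i, p = ((X j - C (c j)) ^ 2 - C (h j ^ 2)) * q}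

/-- The vertices of the `d`-rectangle with centre `c` and half-lengths `h`. -/
def IsVertex {d : ℕ} (c h : Fin d → ℝ) (a : Fin d → ℝ) : Prop :=
  ∀ i, a i = c i - h i ∨ a i = c i + h i

/-- The `d`-rectangle `K = ∏_i [c_i − h_i, c_i + h_i]`. -/
def box {d : ℕ} (c h : Fin d → ℝ) : Set (Fin d → ℝ) :=
  Set.univ.pi fun i => Set.Icc (c i - h i) (c i + h i)

/-- The iterated partial derivative `∂^α`. -/
noncomputable def pderivPow {d : ℕ} (α : Fin d → ℕ) :
    MvPolynomial (Fin d) ℝ →ₗ[ℝ] MvPolynomial (Fin d) ℝ :=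
  (List.ofFn fun i : Fin d =>
    ((pderiv (R := ℝ) i).toLinearMap :
        Module.End ℝ (MvPolynomial (Fin d) ℝ)) ^ α i).prod

/-- Exponents of the monomials spanning the Adini space. -/
def AdiniExp {d : ℕ} (α : Fin d →₀ ℕ) : Prop :=
  ∃ i, α i ≤ 3 ∧ ∀ j, j ≠ i → α j ≤ 1

lemma Q1_mem_monomial {d : ℕ} (α : Fin d →₀ ℕ) (hα : ∀ i, α i ≤ 1) (r : ℝ) :
    monomial α r ∈ Q1 d := by
  have : monomial α r = r • monomial α (1 : ℝ) := by simp [smul_monomial]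
  rw [this]
  exact Submodule.smul_mem _ _ (Submodule.subset_span ⟨α, hα, rfl⟩)

lemma Q1_induction {d : ℕ} (N : Submodule ℝ (MvPolynomial (Fin d) ℝ))
    (H : ∀ α : Fin d →₀ ℕ, (∀ i, α i ≤ 1) → monomial α (1 : ℝ) ∈ N) : Q1 d ≤ N := by
  refine Submodule.span_le.2 ?_
  rintro p ⟨α, hα, rfl⟩
  exact H α hα

lemma X_sq_mul_monomial {d : ℕ} (i : Fin d) (α : Fin d →₀ ℕ) :
    (X i ^ 2 * monomial α (1 : ℝ) : MvPolynomial (Fin d) ℝ)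
      = monomial (Finsupp.single i 2 + α) 1 := by
  rw [X_pow_eq_monomial, monomial_mul, one_mul]

lemma PA_induction {d : ℕ} (hd : 1 ≤ d) (N : Submodule ℝ (MvPolynomial (Fin d) ℝ))
    (H : ∀ α : Fin d →₀ ℕ, AdiniExp α → monomial α (1 : ℝ) ∈ N) : PA d ≤ N := by
  refine sup_le ?_ (Submodule.span_le.2 ?_)
  · refine Q1_induction N fun α hα => H α ⟨⟨0, hd⟩, (hα _).trans (by norm_num), fun j _ => hα j⟩
  · rintro p ⟨i, q, hq, rfl⟩
    have : Q1 d ≤ N.comap (LinearMap.mulLeft ℝ (X i ^ 2)) := by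
      refine Q1_induction _ fun α hα => ?_
      rw [Submodule.mem_comap, LinearMap.mulLeft_apply, X_sq_mul_monomial]
      refine H _ ⟨i, ?_, fun j hj => ?_⟩
      · have := hα i
        simp; omega
      · have := hα j
        simp [Finsupp.single_apply, hj.symm, this]
    exact this hq

lemma Q1_le_PA {d : ℕ} : Q1 d ≤ PA d := le_sup_left

lemma sq_mul_mem_PA {d : ℕ} (i : Fin d) {q : MvPolynomial (Fin d) ℝ} (hq : q ∈ Q1 d) :
    X i ^ 2 * q ∈ PA d :=
  (le_sup_right : _ ≤ PA d) (Submodule.subset_span ⟨i, q, hq, rfl⟩)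

lemma monomial_mem_PA {d : ℕ} (α : Fin d →₀ ℕ) (hα : AdiniExp α) :
    monomial α (1 : ℝ) ∈ PA d := by
  obtain ⟨i, hi, hj⟩ := hα
  by_cases h1 : α i ≤ 1
  · refine Q1_le_PA (Q1_mem_monomial α (fun j => ?_) 1)
    by_cases h : j = i
    · rw [h]; exact h1
    · exact hj j h
  · have hle : Finsupp.single i 2 ≤ α := by
      rw [Finsupp.single_le_iff]; omega
    have : monomial α (1 : ℝ) = X i ^ 2 * monomial (α - Finsupp.single i 2) (1 : ℝ) := by
      rw [X_sq_mul_monomial, add_tsub_cancel_of_le hle]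
    rw [this]
    refine sq_mul_mem_PA i (Q1_mem_monomial _ (fun j => ?_) 1)
    by_cases h : j = i
    · subst h; simp; omega
    · have := hj j h
      simp [Finsupp.single_apply, Ne.symm h, this]

/-- The bubble `(x_i - c_i)² - h_i²`. -/
noncomputable def gb {d : ℕ} (c h : Fin d → ℝ) (i : Fin d) : MvPolynomial (Fin d) ℝ :=
  (X i - C (c i)) ^ 2 - C (h i ^ 2)

lemma C_mem_Q1 {d : ℕ} (r : ℝ) : (C r : MvPolynomial (Fin d) ℝ) ∈ Q1 d :=
  Q1_mem_monomial 0 (by simp) r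

lemma CX_mem_Q1 {d : ℕ} (i : Fin d) (r : ℝ) : (C r * X i : MvPolynomial (Fin d) ℝ) ∈ Q1 d := by
  rw [C_mul_X_eq_monomial]
  refine Q1_mem_monomial _ (fun j => ?_) r
  rw [Finsupp.single_apply]; split_ifs <;> simp

lemma CXX_mem_Q1 {d : ℕ} {i j : Fin d} (hij : i ≠ j) (r : ℝ) :
    (C r * X i * X j : MvPolynomial (Fin d) ℝ) ∈ Q1 d := by
  rw [C_mul_X_eq_monomial, X, monomial_mul]
  refine Q1_mem_monomial _ (fun k => ?_) _
  simp only [Finsupp.add_apply, Finsupp.single_apply]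
  split_ifs with h1 h2
  · exact absurd (h1.trans h2.symm) hij
  all_goals simp

lemma X4_mem {d : ℕ} (c h : Fin d → ℝ) (i : Fin d) :
    X i ^ 4 - gb c h i * gb c h i ∈ PA d := by
  have : X i ^ 4 - gb c h i * gb c h i =
      X i ^ 2 * (C (4 * c i) * X i + C (- 4 * c i ^ 2 - 2 * (c i ^ 2 - h i ^ 2)))
      + (C (4 * c i * (c i ^ 2 - h i ^ 2)) * X i + C (-(c i ^ 2 - h i ^ 2) ^ 2)) := by
    unfold gb
    simp only [map_add, map_sub, map_mul, map_pow, map_neg, map_ofNat]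
    ring
  rw [this]
  exact add_mem (sq_mul_mem_PA i (add_mem (CX_mem_Q1 _ _) (C_mem_Q1 _)))
    (Q1_le_PA (add_mem (CX_mem_Q1 _ _) (C_mem_Q1 _)))

lemma X22_mem {d : ℕ} (c h : Fin d → ℝ) {i j : Fin d} (hij : i ≠ j) :
    X i ^ 2 * X j ^ 2 - gb c h i * gb c h j ∈ PA d := by
  have : X i ^ 2 * X j ^ 2 - gb c h i * gb c h j =
      X i ^ 2 * (C (2 * c j) * X j + C (- (c j ^ 2 - h j ^ 2)))
      + X j ^ 2 * (C (2 * c i) * X i + C (- (c i ^ 2 - h i ^ 2)))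
      + (C (-4 * c i * c j) * X i * X j + C (2 * c i * (c j ^ 2 - h j ^ 2)) * X i
        + C (2 * c j * (c i ^ 2 - h i ^ 2)) * X j
        + C (-(c i ^ 2 - h i ^ 2) * (c j ^ 2 - h j ^ 2))) := by
    unfold gb
    simp only [map_add, map_sub, map_mul, map_pow, map_neg, map_ofNat]
    ring
  rw [this]
  exact add_mem (add_mem (sq_mul_mem_PA i (add_mem (CX_mem_Q1 _ _) (C_mem_Q1 _)))
    (sq_mul_mem_PA j (add_mem (CX_mem_Q1 _ _) (C_mem_Q1 _))))
    (Q1_le_PA (add_mem (add_mem (add_mem (CXX_mem_Q1 hij _) (CX_mem_Q1 _ _)) (CX_mem_Q1 _ _))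
      (C_mem_Q1 _)))

lemma exp_cases {d : ℕ} (hd : 1 ≤ d) (α : Fin d →₀ ℕ) (hα : ∑ i, α i ≤ 4) :
    AdiniExp α ∨ (∃ i, α = Finsupp.single i 4) ∨
      ∃ i j, i ≠ j ∧ α = Finsupp.single i 2 + Finsupp.single j 2 := by
  have : Nonempty (Fin d) := ⟨⟨0, hd⟩⟩
  obtain ⟨i, -, hi⟩ := Finset.exists_max_image Finset.univ (fun i => α i) Finset.univ_nonempty
  have hi' : ∀ j, α j ≤ α i := fun j => hi j (Finset.mem_univ _)
  have h2 : ∀ j, j ≠ i → α i + α j ≤ 4 := fun j hj => by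
    have := Finset.sum_le_sum_of_subset (f := fun i => α i) (Finset.subset_univ {i, j})
    rw [Finset.sum_pair hj.symm] at this
    omega
  have h3 : ∀ j k, j ≠ i → k ≠ i → j ≠ k → α i + α j + α k ≤ 4 := fun j k hj hk hjk => by
    have := Finset.sum_le_sum_of_subset (f := fun i => α i) (Finset.subset_univ {i, j, k})
    rw [Finset.sum_insert (by simp [hj.symm, hk.symm]), Finset.sum_pair hjk] at this
    omega
  by_cases h4 : α i ≤ 3
  · by_cases hA : ∀ j, j ≠ i → α j ≤ 1
    · exact Or.inl ⟨i, h4, hA⟩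
    · push Not at hA
      obtain ⟨j, hj, hj1⟩ := hA
      refine Or.inr (Or.inr ⟨i, j, hj.symm, ?_⟩)
      have e1 := h2 j hj
      have e2 := hi' j
      ext k
      simp only [Finsupp.add_apply, Finsupp.single_apply]
      by_cases hki : k = i
      · subst hki; simp [hj]; omega
      · by_cases hkj : k = j
        · subst hkj; simp [Ne.symm hki]; omega
        · have := h3 j k hj hki (Ne.symm hkj)
          simp [Ne.symm hki, Ne.symm hkj]; omega
  · refine Or.inr (Or.inl ⟨i, ?_⟩)
    have e0 : α i ≤ 4 := (Finset.single_le_sum (f := fun i => α i) (fun _ _ => Nat.zero_le _)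
      (Finset.mem_univ i)).trans hα
    ext k
    rw [Finsupp.single_apply]
    by_cases hki : k = i
    · subst hki; simp; omega
    · have := h2 k hki
      simp [Ne.symm hki]; omega

/-! Unisolvence -/

lemma Q1_degreeOf {d : ℕ} {q : MvPolynomial (Fin d) ℝ} (hq : q ∈ Q1 d) (i : Fin d) :
    q.degreeOf i < 2 := by
  rw [degreeOf_lt_iff (by norm_num)]
  intro m hm
  rw [mem_support_iff] at hm
  by_contra hcon
  apply hm
  have : Q1 d ≤ LinearMap.ker (lcoeff ℝ m : MvPolynomial (Fin d) ℝ →ₗ[ℝ] ℝ) := by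
    refine Q1_induction _ fun α hα => ?_
    rw [LinearMap.mem_ker, lcoeff_apply, coeff_monomial, if_neg]
    rintro rfl
    have := hα i
    omega
  exact this hq

lemma Q1_unisolvent {d : ℕ} (c h : Fin d → ℝ) (hh : ∀ i, 0 < h i)
    {q : MvPolynomial (Fin d) ℝ} (hq : q ∈ Q1 d)
    (hz : ∀ a, IsVertex c h a → eval a q = 0) : q = 0 := by
  refine eq_zero_of_eval_zero_at_prod_finset q (fun i => {c i - h i, c i + h i}) (fun i => ?_) ?_
  · rw [Finset.card_pair (by have := hh i; linarith)]
    exact Q1_degreeOf hq i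
  · intro x hx
    exact hz x fun i => by simpa using hx i

lemma pderiv_gb_self {d : ℕ} (c h : Fin d → ℝ) (i : Fin d) :
    pderiv i (gb c h i) = C 2 * (X i - C (c i)) := by
  have : (C 2 : MvPolynomial (Fin d) ℝ) = 2 := map_ofNat C 2
  simp [gb, this]

lemma pderiv_gb_ne {d : ℕ} (c h : Fin d → ℝ) {i j : Fin d} (hij : i ≠ j) :
    pderiv i (gb c h j) = 0 := by
  simp [gb, pderiv_X_of_ne hij.symm]

lemma eval_gb {d : ℕ} (c h : Fin d → ℝ) (i : Fin d) {a : Fin d → ℝ} (ha : IsVertex c h a) :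
    eval a (gb c h i) = 0 := by
  simp only [gb, map_sub, map_pow, eval_X, eval_C]
  rcases ha i with h | h <;> rw [h] <;> ring

lemma PA_decomp {d : ℕ} (c h : Fin d → ℝ) {z : MvPolynomial (Fin d) ℝ} (hz : z ∈ PA d) :
    ∃ q0 ∈ Q1 d, ∃ q : Fin d → MvPolynomial (Fin d) ℝ, (∀ i, q i ∈ Q1 d) ∧
      z = q0 + ∑ i, gb c h i * q i := by
  let N : Submodule ℝ (MvPolynomial (Fin d) ℝ) :=
    { carrier := {z | ∃ q0 ∈ Q1 d, ∃ q : Fin d → MvPolynomial (Fin d) ℝ, (∀ i, q i ∈ Q1 d) ∧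
        z = q0 + ∑ i, gb c h i * q i}
      zero_mem' := ⟨0, zero_mem _, 0, fun _ => zero_mem _, by simp⟩
      add_mem' := by
        rintro a b ⟨q0, h0, q, hq, rfl⟩ ⟨r0, k0, r, hr, rfl⟩
        refine ⟨q0 + r0, add_mem h0 k0, q + r, fun i => add_mem (hq i) (hr i), ?_⟩
        simp only [Pi.add_apply, mul_add, Finset.sum_add_distrib]
        ring
      smul_mem' := by
        rintro s a ⟨q0, h0, q, hq, rfl⟩
        refine ⟨s • q0, Submodule.smul_mem _ _ h0, s • q,
          fun i => Submodule.smul_mem _ _ (hq i), ?_⟩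
        simp only [Pi.smul_apply, mul_smul_comm, Finset.smul_sum, smul_add] }
  have hQ : Q1 d ≤ N := fun q hq => ⟨q, hq, 0, fun _ => zero_mem _, by simp⟩
  have hg : ∀ (i : Fin d) q, q ∈ Q1 d → gb c h i * q ∈ N := fun i q hq => by
    refine ⟨0, zero_mem _, Pi.single i q, fun j => ?_, ?_⟩
    · by_cases hj : j = i
      · subst hj; simpa using hq
      · simp [hj]
    · rw [Finset.sum_eq_single i] <;> simp +contextual
  have hX : ∀ (i : Fin d), Q1 d ≤ N.comap (LinearMap.mulLeft ℝ (X i)) := fun i => by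
    refine Q1_induction _ fun α hα => ?_
    rw [Submodule.mem_comap, LinearMap.mulLeft_apply]
    by_cases h0 : α i = 0
    · rw [X, monomial_mul]
      refine hQ (Q1_mem_monomial _ (fun j => ?_) _)
      have := hα j
      rw [Finsupp.add_apply, Finsupp.single_apply]
      split_ifs with hj
      · subst hj; omega
      · omega
    · have hle : Finsupp.single i 1 ≤ α := by rw [Finsupp.single_le_iff]; omega
      set β := α - Finsupp.single i 1 with hβ
      have e1 : monomial α (1 : ℝ) = X i * monomial β (1 : ℝ) := by
        rw [X, monomial_mul, hβ, add_tsub_cancel_of_le hle, one_mul]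
      have hb : monomial β (1 : ℝ) ∈ Q1 d := Q1_mem_monomial _ (fun j => by
        have := hα j
        simp only [hβ, Finsupp.tsub_apply]; omega) 1
      have e2 : X i * monomial α (1 : ℝ) = gb c h i * monomial β (1 : ℝ)
          + ((2 * c i) • monomial α (1 : ℝ) + (h i ^ 2 - c i ^ 2) • monomial β (1 : ℝ)) := by
        rw [e1, gb]
        simp only [smul_eq_C_mul, map_add, map_sub, map_mul, map_pow, map_ofNat]
        ring
      rw [e2]
      exact add_mem (hg _ _ hb) (add_mem (N.smul_mem _ (hQ (Q1_mem_monomial _ hα 1)))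
        (N.smul_mem _ (hQ hb)))
  have : PA d ≤ N := by
    refine sup_le hQ (Submodule.span_le.2 ?_)
    rintro p ⟨i, q, hq, rfl⟩
    have e2 : X i ^ 2 * q = gb c h i * q
        + ((2 * c i) • (X i * q) + (h i ^ 2 - c i ^ 2) • q) := by
      rw [gb]
      simp only [smul_eq_C_mul, map_add, map_sub, map_mul, map_pow, map_ofNat]
      ring
    rw [e2]
    exact add_mem (hg _ _ hq) (add_mem (N.smul_mem _ (hX i hq))
        (N.smul_mem _ (hQ hq)))
  exact this hz

lemma PA_unisolvent {d : ℕ} (c h : Fin d → ℝ) (hh : ∀ i, 0 < h i)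
    {z : MvPolynomial (Fin d) ℝ} (hz : z ∈ PA d)
    (h0 : ∀ a, IsVertex c h a → eval a z = 0)
    (h1 : ∀ a, IsVertex c h a → ∀ k, eval a (pderiv k z) = 0) : z = 0 := by
  obtain ⟨q0, hq0, q, hq, rfl⟩ := PA_decomp c h hz
  have e0 : q0 = 0 := Q1_unisolvent c h hh hq0 fun a ha => by
    have := h0 a ha
    simpa [eval_gb c h _ ha] using this
  subst e0
  have e1 : ∀ k, q k = 0 := fun k => Q1_unisolvent c h hh (hq k) fun a ha => by
    have := h1 a ha k
    rw [zero_add, map_sum, map_sum, Finset.sum_eq_single k] at this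
    · rw [pderiv_mul, pderiv_gb_self, map_add, map_mul, map_mul (eval a) (gb c h k),
        eval_gb c h k ha] at this
      simp only [map_mul, map_sub, eval_X, eval_C, zero_mul, add_zero, mul_eq_zero] at this
      rcases this with (h2 | h2) | h2
      · norm_num at h2
      · have := hh k
        rcases ha k with h3 | h3 <;> rw [h3] at h2 <;> linarith
      · exact h2
    · intro j _ hj
      rw [pderiv_mul, pderiv_gb_ne c h hj.symm, map_add, map_mul, map_mul,
        eval_gb c h j ha]
      simp
    · simp
  simp [e1]

/-! Integrals -/

lemma integrable_box {d : ℕ} (c h : Fin d → ℝ) (p : MvPolynomial (Fin d) ℝ) :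
    IntegrableOn (fun x => eval x p) (box c h) := by
  have hc : IsCompact (box c h) := isCompact_univ_pi fun i => isCompact_Icc
  exact (MvPolynomial.continuous_eval p).continuousOn.integrableOn_compact hc

/-- Integration over the box, as a linear functional. -/
noncomputable def Ib {d : ℕ} (c h : Fin d → ℝ) : MvPolynomial (Fin d) ℝ →ₗ[ℝ] ℝ where
  toFun p := ∫ x in box c h, eval x p
  map_add' p q := by
    simp only [map_add]
    exact integral_add (integrable_box c h p) (integrable_box c h q)
  map_smul' r p := by
    simp only [smul_eval, RingHom.id_apply, smul_eq_mul]
    exact integral_const_mul _ _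

lemma Ib_sep {d : ℕ} (c h : Fin d → ℝ) (i : Fin d) (F : MvPolynomial (Fin d) ℝ) (f : ℝ → ℝ)
    (hF : ∀ x, eval x F = f (x i)) (α : Fin d →₀ ℕ)
    (hf : ∫ t in Set.Icc (c i - h i) (c i + h i), f t * t ^ α i = 0) :
    Ib c h (F * monomial α 1) = 0 := by
  have e : ∀ x : Fin d → ℝ, eval x (F * monomial α 1) =
      ∏ j, ((fun (j : Fin d) (t : ℝ) => (if j = i then f t else 1) * t ^ α j) j (x j)) := by
    intro x
    rw [map_mul, hF, eval_monomial, Finsupp.prod_fintype _ _ (by simp), one_mul]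
    simp only [Finset.prod_mul_distrib, Finset.prod_ite_eq', Finset.mem_univ, if_true]
  change ∫ x in box c h, eval x (F * monomial α 1) = 0
  simp_rw [e]
  rw [box, volume_pi, Measure.restrict_pi_pi,
    integral_fintype_prod_eq_prod
      (fun (j : Fin d) (t : ℝ) => (if j = i then f t else 1) * t ^ α j)]
  refine Finset.prod_eq_zero (Finset.mem_univ i) ?_
  simpa using hf

lemma int_of_deriv (a b : ℝ) (hab : a ≤ b) (f G : ℝ → ℝ) (hf : Continuous f)
    (hG : ∀ t, HasDerivAt G (f t) t) (h0 : G b = G a) :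
    ∫ t in Set.Icc a b, f t = 0 := by
  rw [integral_Icc_eq_integral_Ioc, ← intervalIntegral.integral_of_le hab,
    intervalIntegral.integral_eq_sub_of_hasDerivAt (fun t _ => hG t)
      (hf.intervalIntegrable _ _), h0, sub_self]

lemma int_quad (c h : ℝ) (hh : 0 < h) (k : ℕ) (hk : k ≤ 1) :
    ∫ t in Set.Icc (c - h) (c + h), (3 * (t - c) ^ 2 - h ^ 2) * t ^ k = 0 := by
  have hs : ∀ t : ℝ, HasDerivAt (fun t => t - c) 1 t := fun t => (hasDerivAt_id t).sub_const c
  interval_cases k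
  · refine int_of_deriv _ _ (by linarith) _ (fun t => (t - c) ^ 3 - h ^ 2 * (t - c))
      (by fun_prop) (fun t => ?_) (by ring)
    refine (((hs t).pow 3).sub ((hs t).const_mul (h ^ 2))).congr_deriv ?_
    norm_num
  · refine int_of_deriv _ _ (by linarith) _ (fun t => (3 / 4) * (t - c) ^ 4
      - (h ^ 2 / 2) * (t - c) ^ 2 + c * ((t - c) ^ 3 - h ^ 2 * (t - c)))
      (by fun_prop) (fun t => ?_) (by ring)
    refine (((((hs t).pow 4).const_mul (3 / 4)).sub (((hs t).pow 2).const_mul (h ^ 2 / 2))).add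
      ((((hs t).pow 3).sub ((hs t).const_mul (h ^ 2))).const_mul c)).congr_deriv ?_
    norm_num
    ring

lemma int_lin (c h : ℝ) (hh : 0 < h) :
    ∫ t in Set.Icc (c - h) (c + h), (t - c) * t ^ 0 = 0 := by
  have hs : ∀ t : ℝ, HasDerivAt (fun t => t - c) 1 t := fun t => (hasDerivAt_id t).sub_const c
  refine int_of_deriv _ _ (by linarith) _ (fun t => (1 / 2) * (t - c) ^ 2)
      (by fun_prop) (fun t => ?_) (by ring)
  refine (((hs t).pow 2).const_mul (1 / 2)).congr_deriv ?_
  norm_num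
  ring

/-- The quadratic orthogonal to linear functions. -/
noncomputable def Lq {d : ℕ} (c h : Fin d → ℝ) (j : Fin d) : MvPolynomial (Fin d) ℝ :=
  C 3 * (X j - C (c j)) ^ 2 - C (h j ^ 2)

lemma Ib_quad {d : ℕ} (c h : Fin d → ℝ) (hh : ∀ i, 0 < h i) (j : Fin d)
    {q : MvPolynomial (Fin d) ℝ} (hq : q ∈ Q1 d) : Ib c h (Lq c h j * q) = 0 := by
  have : Q1 d ≤ LinearMap.ker (Ib c h ∘ₗ LinearMap.mulLeft ℝ (Lq c h j)) := by
    refine Q1_induction _ fun α hα => ?_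
    rw [LinearMap.mem_ker, LinearMap.comp_apply, LinearMap.mulLeft_apply]
    exact Ib_sep c h j _ (fun t => 3 * (t - c j) ^ 2 - h j ^ 2) (fun x => by simp [Lq]) α
      (int_quad _ _ (hh j) _ (hα j))
  exact this hq

lemma Ib_lin_monomial {d : ℕ} (c h : Fin d → ℝ) (hh : ∀ i, 0 < h i) {i j : Fin d} (hij : i ≠ j)
    (α : Fin d →₀ ℕ) (hα : α i = 0) :
    Ib c h ((X i - C (c i)) * (X j - C (c j)) * monomial α 1) = 0 := by
  have e : (X i - C (c i)) * (X j - C (c j)) * monomial α (1 : ℝ) =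
      (X i - C (c i)) * monomial (Finsupp.single j 1 + α) 1
      - c j • ((X i - C (c i)) * monomial α 1) := by
    have : monomial (Finsupp.single j 1 + α) (1 : ℝ) = X j * monomial α 1 := by
      rw [X, monomial_mul, one_mul]
    rw [this, smul_eq_C_mul]
    ring
  rw [e, map_sub, map_smul,
    Ib_sep c h i (X i - C (c i)) (fun t => t - c i) (fun x => by simp) α
      (by rw [hα]; exact int_lin _ _ (hh i)),
    Ib_sep c h i (X i - C (c i)) (fun t => t - c i) (fun x => by simp) _
      (by
        have : (Finsupp.single j 1 + α : Fin d →₀ ℕ) i = 0 := by simp [hij.symm, hα]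
        rw [this]; exact int_lin _ _ (hh i))]
  simp

lemma monomial_eq_smul {d : ℕ} (α : Fin d →₀ ℕ) (r : ℝ) :
    monomial α r = r • monomial α (1 : ℝ) := by simp [smul_monomial]

lemma Ib_cross {d : ℕ} (hd : 1 ≤ d) (c h : Fin d → ℝ) (hh : ∀ i, 0 < h i) {i j : Fin d}
    (hij : i ≠ j) {v : MvPolynomial (Fin d) ℝ} (hv : v ∈ PA d) :
    Ib c h ((X i - C (c i)) * (X j - C (c j)) * pderiv i (pderiv j v)) = 0 := by
  have : PA d ≤ LinearMap.ker (Ib c h ∘ₗ LinearMap.mulLeft ℝ ((X i - C (c i)) * (X j - C (c j)))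
      ∘ₗ (pderiv i).toLinearMap ∘ₗ (pderiv j).toLinearMap) := by
    refine PA_induction hd _ fun α hα => ?_
    obtain ⟨k, -, hk⟩ := hα
    change Ib c h ((X i - C (c i)) * (X j - C (c j)) * pderiv i (pderiv j (monomial α 1))) = 0
    rw [pderiv_monomial, pderiv_monomial, monomial_eq_smul, mul_smul_comm, map_smul]
    by_cases hki : k = i
    · rw [mul_comm (X i - C (c i)), Ib_lin_monomial c h hh hij.symm, smul_zero]
      have := hk j (by rw [hki]; exact hij.symm)
      simp [hij]; omega
    · rw [Ib_lin_monomial c h hh hij, smul_zero]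
      have := hk i (Ne.symm hki)
      simp; omega
  exact this hv

lemma pderiv2_mem {d : ℕ} (hd : 1 ≤ d) (i : Fin d) {v : MvPolynomial (Fin d) ℝ}
    (hv : v ∈ PA d) : pderiv i (pderiv i v) ∈ Q1 d := by
  have : PA d ≤ (Q1 d).comap ((pderiv i).toLinearMap ∘ₗ (pderiv i).toLinearMap) := by
    refine PA_induction hd _ fun α hα => ?_
    obtain ⟨k, hk3, hk⟩ := hα
    change pderiv i (pderiv i (monomial α 1)) ∈ Q1 d
    rw [pderiv_monomial, pderiv_monomial]
    by_cases hi : α i ≤ 1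
    · have : (α - Finsupp.single i 1 : Fin d →₀ ℕ) i = 0 := by simp; omega
      rw [this]
      simp
    · have hik : i = k := by
        by_contra hne
        exact hi (hk i hne)
      subst hik
      refine Q1_mem_monomial _ (fun j => ?_) _
      by_cases hj : j = i
      · subst hj; simp; omega
      · have := hk j hj
        simp [Ne.symm hj]; omega
  exact this hv

lemma pderiv4_zero {d : ℕ} (hd : 1 ≤ d) {i j : Fin d} (hij : i ≠ j) {v : MvPolynomial (Fin d) ℝ}
    (hv : v ∈ PA d) : pderiv i (pderiv i (pderiv j (pderiv j v))) = 0 := by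
  have : PA d ≤ LinearMap.ker ((pderiv i).toLinearMap ∘ₗ (pderiv i).toLinearMap ∘ₗ
      (pderiv j).toLinearMap ∘ₗ (pderiv (R := ℝ) j).toLinearMap) := by
    refine PA_induction hd _ fun α hα => ?_
    obtain ⟨k, hk3, hk⟩ := hα
    change pderiv i (pderiv i (pderiv j (pderiv j (monomial α 1)))) = 0
    simp only [pderiv_monomial]
    rw [monomial_eq_zero]
    by_cases hki : k = i
    · have := hk j (by rw [hki]; exact hij.symm)
      have : (α - Finsupp.single j 1 : Fin d →₀ ℕ) j = 0 := by simp; omega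
      simp only [this]; simp
    · have := hk i (Ne.symm hki)
      have : (α - Finsupp.single j 1 - Finsupp.single j 1 - Finsupp.single i 1 : Fin d →₀ ℕ) i = 0 := by
        simp; omega
      simp only [this]; simp
  exact this hv

/-! The explicit interpolation errors -/

lemma pderiv_lin_self {d : ℕ} (c : Fin d → ℝ) (i : Fin d) :
    pderiv i (X i - C (c i) : MvPolynomial (Fin d) ℝ) = 1 := by simp

lemma pderiv_lin_ne {d : ℕ} (c : Fin d → ℝ) {i j : Fin d} (hij : i ≠ j) :
    pderiv i (X j - C (c j) : MvPolynomial (Fin d) ℝ) = 0 := by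
  simp [pderiv_X_of_ne hij.symm]

lemma dgg {d : ℕ} (c h : Fin d → ℝ) {i j : Fin d} (hij : i ≠ j) :
    pderiv i (gb c h i * gb c h j) = C 2 * ((X i - C (c i)) * gb c h j) := by
  rw [pderiv_mul, pderiv_gb_self, pderiv_gb_ne c h hij]; ring

lemma dgg_ne {d : ℕ} (c h : Fin d → ℝ) {i j k : Fin d} (hi : k ≠ i) (hj : k ≠ j) :
    pderiv k (gb c h i * gb c h j) = 0 := by
  rw [pderiv_mul, pderiv_gb_ne c h hi, pderiv_gb_ne c h hj]; ring

lemma ddgg_same {d : ℕ} (c h : Fin d → ℝ) {i j : Fin d} (hij : i ≠ j) :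
    pderiv i (pderiv i (gb c h i * gb c h j)) = C 2 * gb c h j := by
  rw [dgg c h hij, pderiv_C_mul, pderiv_mul, pderiv_lin_self, pderiv_gb_ne c h hij]; ring

lemma ddgg_cross {d : ℕ} (c h : Fin d → ℝ) {i j : Fin d} (hij : i ≠ j) :
    pderiv j (pderiv i (gb c h i * gb c h j)) = C 4 * ((X j - C (c j)) * (X i - C (c i))) := by
  have e4 : (C 4 : MvPolynomial (Fin d) ℝ) = C 2 * C 2 := by rw [← C_mul]; norm_num
  rw [dgg c h hij, pderiv_C_mul, pderiv_mul, pderiv_lin_ne c hij.symm, pderiv_gb_self, e4]; ring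

lemma ddgg_other {d : ℕ} (c h : Fin d → ℝ) {i j k : Fin d} (hij : i ≠ j) (hi : k ≠ i)
    (hj : k ≠ j) : pderiv k (pderiv i (gb c h i * gb c h j)) = 0 := by
  rw [dgg c h hij, pderiv_C_mul, pderiv_mul, pderiv_lin_ne c hi, pderiv_gb_ne c h hj]; ring

lemma dg2 {d : ℕ} (c h : Fin d → ℝ) (i : Fin d) :
    pderiv i (gb c h i * gb c h i) = C 4 * ((X i - C (c i)) * gb c h i) := by
  have e4 : (C 4 : MvPolynomial (Fin d) ℝ) = C 2 + C 2 := by rw [← C_add]; norm_num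
  rw [pderiv_mul, pderiv_gb_self, e4]; ring

lemma ddg2 {d : ℕ} (c h : Fin d → ℝ) (i : Fin d) :
    pderiv i (pderiv i (gb c h i * gb c h i)) = C 4 * Lq c h i := by
  have e3 : (C 3 : MvPolynomial (Fin d) ℝ) = 1 + C 2 := by
    rw [← C_1, ← C_add]; norm_num
  rw [dg2, pderiv_C_mul, pderiv_mul, pderiv_lin_self, pderiv_gb_self, Lq, gb, e3]; ring

lemma ddg2_ne {d : ℕ} (c h : Fin d → ℝ) {i k : Fin d} (hk : k ≠ i) :
    pderiv k (pderiv i (gb c h i * gb c h i)) = 0 := by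
  rw [dg2, pderiv_C_mul, pderiv_mul, pderiv_lin_ne c hk, pderiv_gb_ne c h hk]; ring

lemma Ib_C_mul {d : ℕ} (c h : Fin d → ℝ) (r : ℝ) (p : MvPolynomial (Fin d) ℝ) :
    Ib c h (C r * p) = r * Ib c h p := by
  rw [← smul_eq_C_mul, map_smul, smul_eq_mul]

/-- The right-hand side for one `k`. -/
noncomputable def rhsK {d : ℕ} (c h : Fin d → ℝ) (k : Fin d) (u v : MvPolynomial (Fin d) ℝ) : ℝ :=
  - ∑ j ∈ Finset.univ.erase k, h j ^ 2 / 3 *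
    Ib c h (pderiv k (pderiv k (pderiv j (pderiv j u))) * pderiv k (pderiv k v))

lemma rhsK_zero {d : ℕ} (c h : Fin d → ℝ) (k : Fin d) (u v : MvPolynomial (Fin d) ℝ)
    (H : ∀ j, j ≠ k → pderiv k (pderiv k (pderiv j (pderiv j u))) = 0) : rhsK c h k u v = 0 := by
  rw [rhsK, neg_eq_zero]
  refine Finset.sum_eq_zero fun j hj => ?_
  rw [H j (Finset.ne_of_mem_erase hj), zero_mul, map_zero, mul_zero]

/-- Polynomials with an explicit interpolation error satisfying the identity termwise. -/
def Good {d : ℕ} (c h : Fin d → ℝ) : Submodule ℝ (MvPolynomial (Fin d) ℝ) where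
  carrier := {u | ∃ e, u - e ∈ PA d ∧
    (∀ a, IsVertex c h a → eval a e = 0 ∧ ∀ k, eval a (pderiv k e) = 0) ∧
    (∀ v ∈ PA d, ∀ k l, k ≠ l → Ib c h (pderiv k (pderiv l e) * pderiv k (pderiv l v)) = 0) ∧
    ∀ v ∈ PA d, ∀ k, Ib c h (pderiv k (pderiv k e) * pderiv k (pderiv k v)) = rhsK c h k u v}
  zero_mem' := ⟨0, by simp, by simp, by simp, by simp [rhsK]⟩
  add_mem' := by
    rintro u1 u2 ⟨e1, a1, b1, c1, d1⟩ ⟨e2, a2, b2, c2, d2⟩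
    refine ⟨e1 + e2, ?_, fun a ha => ⟨?_, fun k => ?_⟩, fun v hv k l hkl => ?_, fun v hv k => ?_⟩
    · rw [add_sub_add_comm]; exact add_mem a1 a2
    · rw [map_add, (b1 a ha).1, (b2 a ha).1, add_zero]
    · rw [map_add, map_add, (b1 a ha).2, (b2 a ha).2, add_zero]
    · rw [map_add, map_add, add_mul, map_add, c1 v hv k l hkl, c2 v hv k l hkl, add_zero]
    · rw [map_add, map_add, add_mul, map_add, d1 v hv k, d2 v hv k]
      simp only [rhsK, map_add, add_mul, mul_add, Finset.sum_add_distrib]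
      ring
  smul_mem' := by
    rintro r u1 ⟨e1, a1, b1, c1, d1⟩
    refine ⟨r • e1, ?_, fun a ha => ⟨?_, fun k => ?_⟩, fun v hv k l hkl => ?_, fun v hv k => ?_⟩
    · rw [← smul_sub]; exact Submodule.smul_mem _ _ a1
    · rw [smul_eval, (b1 a ha).1, mul_zero]
    · rw [Derivation.map_smul, smul_eval, (b1 a ha).2, mul_zero]
    · rw [Derivation.map_smul, Derivation.map_smul, smul_mul_assoc, map_smul, c1 v hv k l hkl,
        smul_zero]
    · rw [Derivation.map_smul, Derivation.map_smul, smul_mul_assoc, map_smul, d1 v hv k]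
      simp only [rhsK, Derivation.map_smul, smul_mul_assoc, map_smul, smul_eq_mul,
        mul_neg, Finset.mul_sum]
      congr 1
      exact Finset.sum_congr rfl fun j _ => by ring

lemma PA_le_Good {d : ℕ} (hd : 1 ≤ d) (c h : Fin d → ℝ) : PA d ≤ Good c h := by
  intro p hp
  refine ⟨0, by simpa using hp, by simp, by simp, fun v _ k => ?_⟩
  rw [rhsK_zero c h k p v fun j hj => pderiv4_zero hd hj.symm hp]
  simp

lemma gg_vertex {d : ℕ} (c h : Fin d → ℝ) (i j : Fin d) (a : Fin d → ℝ) (ha : IsVertex c h a) :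
    eval a (gb c h i * gb c h j) = 0 ∧ ∀ k, eval a (pderiv k (gb c h i * gb c h j)) = 0 := by
  refine ⟨by simp [eval_gb c h _ ha], fun k => ?_⟩
  rw [pderiv_mul]
  simp [eval_gb c h _ ha]

lemma g2_Good {d : ℕ} (hd : 1 ≤ d) (c h : Fin d → ℝ) (hh : ∀ i, 0 < h i) (i : Fin d) :
    gb c h i * gb c h i ∈ Good c h := by
  refine ⟨_, by simp, gg_vertex c h i i, fun v hv k l hkl => ?_, fun v hv k => ?_⟩
  · by_cases hl : l = i
    · subst hl
      rw [ddg2_ne c h hkl, zero_mul, map_zero]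
    · rw [dgg_ne c h hl hl, map_zero, zero_mul, map_zero]
  · rw [rhsK_zero]
    · by_cases hk : k = i
      · subst hk
        rw [ddg2, mul_assoc, Ib_C_mul, Ib_quad c h hh k (pderiv2_mem hd k hv), mul_zero]
      · rw [dgg_ne c h hk hk, map_zero, zero_mul, map_zero]
    · intro j hj
      by_cases hji : j = i
      · subst hji
        rw [ddg2, Lq, pderiv_C_mul]
        have : pderiv k (C 3 * (X j - C (c j)) ^ 2 - C (h j ^ 2)) = 0 := by
          rw [map_sub, pderiv_C_mul, pderiv_pow, pderiv_lin_ne c hj.symm, pderiv_C]; simp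
        rw [this]; simp
      · rw [dgg_ne c h hji hji]; simp

lemma gg_diag {d : ℕ} (hd : 1 ≤ d) (c h : Fin d → ℝ) (hh : ∀ i, 0 < h i) {i j : Fin d}
    (hij : i ≠ j) {v : MvPolynomial (Fin d) ℝ} (hv : v ∈ PA d) :
    Ib c h (pderiv i (pderiv i (gb c h i * gb c h j)) * pderiv i (pderiv i v))
      = rhsK c h i (gb c h i * gb c h j) v := by
  have hq := pderiv2_mem hd i hv
  have e4 : (C 4 : MvPolynomial (Fin d) ℝ) = C 2 * C 2 := by rw [← C_mul]; norm_num
  rw [rhsK, Finset.sum_eq_single j]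
  · have e1 : pderiv i (pderiv i (pderiv j (pderiv j (gb c h i * gb c h j)))) = C 4 := by
      rw [mul_comm, ddgg_same c h hij.symm, pderiv_C_mul, pderiv_gb_self, pderiv_C_mul,
        pderiv_C_mul, pderiv_lin_self, e4, mul_one]
    have e2 : C 2 * gb c h j * pderiv i (pderiv i v) =
        C (2 / 3) * (Lq c h j * pderiv i (pderiv i v))
          + C (- (4 * h j ^ 2 / 3)) * pderiv i (pderiv i v) := by
      have t1 : (C 2 : MvPolynomial (Fin d) ℝ) = C (2 / 3) * C 3 := by rw [← C_mul]; norm_num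
      have t2 : (C (- (4 * h j ^ 2 / 3)) : MvPolynomial (Fin d) ℝ) =
          C (2 / 3) * C (h j ^ 2) - C (2 / 3) * C 3 * C (h j ^ 2) := by
        rw [← C_mul, ← C_mul, ← C_mul, ← C_sub]; congr 1; ring
      rw [t2, t1, gb, Lq]; ring
    rw [ddgg_same c h hij, e1, e2, map_add, Ib_C_mul, Ib_C_mul, Ib_C_mul, Ib_quad c h hh j hq]
    ring
  · intro m hm hmj
    have hmi := Finset.ne_of_mem_erase hm
    rw [dgg_ne c h hmi hmj]; simp
  · intro hj
    exact absurd (Finset.mem_erase.2 ⟨hij.symm, Finset.mem_univ _⟩) hj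

lemma gg_Good {d : ℕ} (hd : 1 ≤ d) (c h : Fin d → ℝ) (hh : ∀ i, 0 < h i) {i j : Fin d}
    (hij : i ≠ j) : gb c h i * gb c h j ∈ Good c h := by
  refine ⟨_, by simp, gg_vertex c h i j, fun v hv k l hkl => ?_, fun v hv k => ?_⟩
  · by_cases hli : l = i
    · subst hli
      by_cases hkj : k = j
      · subst hkj
        rw [ddgg_cross c h hij, mul_assoc, Ib_C_mul, Ib_cross hd c h hh hkl hv, mul_zero]
      · rw [ddgg_other c h hij hkl hkj, zero_mul, map_zero]
    · by_cases hlj : l = j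
      · subst hlj
        rw [mul_comm (gb c h i)]
        by_cases hki : k = i
        · subst hki
          rw [ddgg_cross c h hij.symm, mul_assoc, Ib_C_mul, Ib_cross hd c h hh hkl hv, mul_zero]
        · rw [ddgg_other c h hij.symm hkl hki, zero_mul, map_zero]
      · rw [dgg_ne c h hli hlj, map_zero, zero_mul, map_zero]
  · by_cases hki : k = i
    · subst hki
      exact gg_diag hd c h hh hij hv
    · by_cases hkj : k = j
      · subst hkj
        rw [mul_comm (gb c h i)]
        exact gg_diag hd c h hh hij.symm hv
      · rw [rhsK_zero, dgg_ne c h hki hkj, map_zero, zero_mul, map_zero]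
        intro m hm
        by_cases hmi : m = i
        · subst hmi
          rw [ddgg_same c h hij, pderiv_C_mul, pderiv_gb_ne c h hkj]; simp
        · by_cases hmj : m = j
          · subst hmj
            rw [mul_comm, ddgg_same c h hij.symm, pderiv_C_mul, pderiv_gb_ne c h hki]; simp
          · rw [dgg_ne c h hmi hmj]; simp

lemma deg4_Good {d : ℕ} (hd : 1 ≤ d) (c h : Fin d → ℝ) (hh : ∀ i, 0 < h i)
    (u : MvPolynomial (Fin d) ℝ) (hu : u.totalDegree ≤ 4) : u ∈ Good c h := by
  rw [u.as_sum]
  refine Submodule.sum_mem _ fun α hα => ?_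
  rw [monomial_eq_smul]
  refine Submodule.smul_mem _ _ ?_
  have hs : ∑ i, α i ≤ 4 := by
    have := le_totalDegree hα
    rw [Finsupp.sum_fintype _ _ (by simp)] at this
    exact this.trans hu
  rcases exp_cases hd α hs with hA | ⟨i, rfl⟩ | ⟨i, j, hij, rfl⟩
  · exact PA_le_Good hd c h (monomial_mem_PA α hA)
  · rw [← X_pow_eq_monomial]
    have := add_mem (PA_le_Good hd c h (X4_mem c h i)) (g2_Good hd c h hh i)
    simpa using this
  · have e : monomial (Finsupp.single i 2 + Finsupp.single j 2) (1 : ℝ) = X i ^ 2 * X j ^ 2 := by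
      rw [X_pow_eq_monomial, X_pow_eq_monomial, monomial_mul, one_mul]
    rw [e]
    have := add_mem (PA_le_Good hd c h (X22_mem c h hij)) (gg_Good hd c h hh hij)
    simpa using this

/-- Lemma 2.2: for `u` of total degree at most 4, `v ∈ P_A`, and `w ∈ P_A`
the Adini canonical interpolant of `u` (matching `u` and `∇u` at every vertex of `K`),
`Σ_{k,l} ∫_K ∂²(u−w)/∂x_k∂x_l ∂²v/∂x_k∂x_l = − Σ_i Σ_{j≠i} (h_j²/3) ∫_K ∂⁴u/∂x_i²∂x_j² ∂²v/∂x_i²`. -/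
theorem adini_interpolation_identity (d : ℕ) (hd : 1 ≤ d)
    (c h : Fin d → ℝ) (hh : ∀ i, 0 < h i)
    (u : MvPolynomial (Fin d) ℝ) (hu : u.totalDegree ≤ 4)
    (v : MvPolynomial (Fin d) ℝ) (hv : v ∈ PA d)
    (w : MvPolynomial (Fin d) ℝ) (hw : w ∈ PA d)
    (hmatch : ∀ a : Fin d → ℝ, IsVertex c h a →
      eval a w = eval a u ∧ ∀ k : Fin d, eval a (pderiv k w) = eval a (pderiv k u)) :
    ∑ k : Fin d, ∑ l : Fin d,
      ∫ x in box c h,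
        eval x (pderiv k (pderiv l (u - w))) * eval x (pderiv k (pderiv l v)) =
    - ∑ i : Fin d, ∑ j ∈ Finset.univ.erase i,
        (h j ^ 2 / 3) *
          ∫ x in box c h,
            eval x (pderiv i (pderiv i (pderiv j (pderiv j u)))) *
              eval x (pderiv i (pderiv i v)) := by
  obtain ⟨e, he, hev, hoff, hdiag⟩ := deg4_Good hd c h hh u hu
  have hz : u - e - w = 0 := by
    refine PA_unisolvent c h hh (sub_mem he hw) (fun a ha => ?_) (fun a ha k => ?_)
    · rw [map_sub, map_sub, (hev a ha).1, (hmatch a ha).1]; ring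
    · rw [map_sub, map_sub, map_sub, map_sub, (hev a ha).2, (hmatch a ha).2]; ring
  have huw : u - w = e := by
    have : u - w - e = 0 := by rw [← hz]; ring
    exact sub_eq_zero.1 this
  rw [huw, ← Finset.sum_neg_distrib]
  refine Finset.sum_congr rfl fun k _ => ?_
  have hI : ∀ p q : MvPolynomial (Fin d) ℝ,
      ∫ x in box c h, eval x p * eval x q = Ib c h (p * q) := fun p q => by
    simp [Ib]
  simp only [hI]
  rw [Finset.sum_eq_single k (fun l _ hl => hoff v hv k l hl.symm) (by simp), hdiag v hv k, rhsK]
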